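/- arXiv:2404.12568 — 2 statements merged into one kernel-verified Lean document; each statement's English description precedes it below -/
import Mathlib

section
/- Assume 0 < τ, σ_min ≤ τ < (σ_min + σ_min,m+1)/2, and δ < σ_min,m+1 − τ, and let r ∈ ℝ^{M+N} satisfy Π̃_m r = r. Set j₀ = min{1, M−N}. Then for every j ≥ j₀ there exists w ∈ K_j(B̃_m, r) such that ‖B̃_m w + r‖ ≤ 2 · ((σ_max + δ)/τ)^{j₀} · (1 − 2/(1 + √(((σ_max + δ)² − τ²)/((σ_min,m+1 − δ)² − τ²))))^{⌊(j−j₀)/2⌋} · ‖r‖, where ⌊·⌋ denotes the integer part. -/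
open Matrix

noncomputable def vnorm {ι : Type*} [Fintype ι] (x : ι → ℝ) : ℝ :=
  Real.sqrt (∑ i, x i ^ 2)

noncomputable def specNorm {ι κ : Type*} [Fintype ι] [Fintype κ] [DecidableEq κ]
    (A : Matrix ι κ ℝ) : ℝ :=
  ‖LinearMap.toContinuousLinearMap (Matrix.toEuclideanLin A)‖

noncomputable def Krylov {ι : Type*} [Fintype ι] [DecidableEq ι]
    (B : Matrix ι ι ℝ) (r : ι → ℝ) (j : ℕ) : Submodule ℝ (ι → ℝ) :=
  Submodule.span ℝ {x | ∃ i < j, x = (B ^ i) *ᵥ r}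

lemma vnorm_eq {ι : Type*} [Fintype ι] (x : ι → ℝ) : vnorm x = ‖(WithLp.toLp 2 x : EuclideanSpace ℝ ι)‖ := by
  simp [vnorm, EuclideanSpace.norm_eq]

lemma vnorm_nonneg {ι : Type*} [Fintype ι] (x : ι → ℝ) : 0 ≤ vnorm x := Real.sqrt_nonneg _

lemma vnorm_sq {ι : Type*} [Fintype ι] (x : ι → ℝ) : vnorm x ^ 2 = x ⬝ᵥ x := by
  unfold vnorm
  rw [Real.sq_sqrt (Finset.sum_nonneg fun i _ => sq_nonneg _)]
  simp [dotProduct, sq]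

lemma vnorm_add_le {ι : Type*} [Fintype ι] (x y : ι → ℝ) : vnorm (x + y) ≤ vnorm x + vnorm y := by
  rw [vnorm_eq, vnorm_eq, vnorm_eq, WithLp.toLp_add]
  exact norm_add_le _ _

lemma vnorm_neg {ι : Type*} [Fintype ι] (x : ι → ℝ) : vnorm (-x) = vnorm x := by
  simp [vnorm]

lemma vnorm_smul {ι : Type*} [Fintype ι] (c : ℝ) (x : ι → ℝ) : vnorm (c • x) = |c| * vnorm x := by
  rw [vnorm_eq, vnorm_eq, WithLp.toLp_smul, norm_smul, Real.norm_eq_abs]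

lemma vnorm_eq_zero {ι : Type*} [Fintype ι] {x : ι → ℝ} (h : vnorm x = 0) : x = 0 := by
  have := vnorm_sq x
  rw [h] at this
  exact dotProduct_self_eq_zero.mp (by simpa using this.symm)

lemma vdot_le {ι : Type*} [Fintype ι] (x y : ι → ℝ) : x ⬝ᵥ y ≤ vnorm x * vnorm y := by
  have h := Finset.sum_mul_sq_le_sq_mul_sq Finset.univ x y
  unfold vnorm
  rw [← Real.sqrt_mul (Finset.sum_nonneg fun i _ => sq_nonneg _)]
  exact Real.le_sqrt_of_sq_le h

lemma specNorm_nonneg {ι κ : Type*} [Fintype ι] [Fintype κ] [DecidableEq κ]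
    (A : Matrix ι κ ℝ) : 0 ≤ specNorm A := norm_nonneg _

lemma vnorm_mulVec_le {ι κ : Type*} [Fintype ι] [Fintype κ] [DecidableEq κ]
    (A : Matrix ι κ ℝ) (x : κ → ℝ) : vnorm (A *ᵥ x) ≤ specNorm A * vnorm x := by
  rw [vnorm_eq, vnorm_eq]
  exact (LinearMap.toContinuousLinearMap (Matrix.toEuclideanLin A)).le_opNorm (WithLp.toLp 2 x)

lemma dot_tr {ι κ : Type*} [Fintype ι] [Fintype κ] (A : Matrix ι κ ℝ) (x : ι → ℝ) (y : κ → ℝ) :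
    x ⬝ᵥ (A *ᵥ y) = (Aᵀ *ᵥ x) ⬝ᵥ y := by
  rw [Matrix.dotProduct_mulVec, Matrix.mulVec_transpose]

lemma vnorm_iso {ι κ : Type*} [Fintype ι] [Fintype κ] [DecidableEq κ] (Q : Matrix ι κ ℝ)
    (hQ : Qᵀ * Q = 1) (x : κ → ℝ) : vnorm (Q *ᵥ x) = vnorm x := by
  have : vnorm (Q *ᵥ x) ^ 2 = vnorm x ^ 2 := by
    rw [vnorm_sq, vnorm_sq, dot_tr, Matrix.mulVec_mulVec, hQ, Matrix.one_mulVec]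
  exact (sq_eq_sq₀ (vnorm_nonneg _) (vnorm_nonneg _)).mp this

lemma proj_tr {ι κ : Type*} [Fintype ι] [Fintype κ] [DecidableEq ι] (Q : Matrix ι κ ℝ) :
    (1 - Q * Qᵀ)ᵀ = 1 - Q * Qᵀ := by
  simp [Matrix.transpose_sub, Matrix.transpose_mul]

lemma proj_idem {ι κ : Type*} [Fintype ι] [Fintype κ] [DecidableEq ι] [DecidableEq κ] (Q : Matrix ι κ ℝ)
    (hQ : Qᵀ * Q = 1) : (1 - Q * Qᵀ) * (1 - Q * Qᵀ) = 1 - Q * Qᵀ := by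
  have : Q * Qᵀ * (Q * Qᵀ) = Q * Qᵀ := by
    rw [Matrix.mul_assoc, ← Matrix.mul_assoc Qᵀ, hQ, Matrix.one_mul]
  rw [Matrix.mul_sub, Matrix.sub_mul, Matrix.sub_mul, this]
  simp

lemma proj_sq {ι κ : Type*} [Fintype ι] [Fintype κ] [DecidableEq ι] [DecidableEq κ] (Q : Matrix ι κ ℝ)
    (hQ : Qᵀ * Q = 1) (x : ι → ℝ) :
    vnorm ((1 - Q * Qᵀ) *ᵥ x) ^ 2 = vnorm x ^ 2 - vnorm (Qᵀ *ᵥ x) ^ 2 := by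
  rw [vnorm_sq, dot_tr, proj_tr, Matrix.mulVec_mulVec, proj_idem Q hQ, Matrix.sub_mulVec,
    sub_dotProduct, Matrix.one_mulVec, vnorm_sq, vnorm_sq, dot_tr, Matrix.transpose_transpose,
    Matrix.mulVec_mulVec]

lemma gap {ι : Type*} [Fintype ι] [DecidableEq ι] {m : ℕ} (X Y : Matrix ι (Fin m) ℝ)
    (hX : Xᵀ * X = 1) (hY : Yᵀ * Y = 1) (s : ℝ) (hs : 0 ≤ s)
    (h : ∀ w, vnorm ((1 - Y * Yᵀ) *ᵥ (X *ᵥ w)) ≤ s * vnorm w) (z : ι → ℝ) (hz : Xᵀ *ᵥ z = 0) :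
    vnorm (Yᵀ *ᵥ z) ≤ s * vnorm z := by
  have hle : vnorm (Yᵀ *ᵥ z) ≤ vnorm z := by
    have := proj_sq Y hY z
    exact abs_le_of_sq_le_sq' (by nlinarith [sq_nonneg (vnorm ((1 - Y * Yᵀ) *ᵥ z))]) (vnorm_nonneg _) |>.2
  rcases le_or_gt 1 s with h1 | h1
  · nlinarith [vnorm_nonneg z]
  have hs2 : 0 < 1 - s ^ 2 := by nlinarith
  have hC : ∀ w, (1 - s ^ 2) * vnorm w ^ 2 ≤ vnorm ((Yᵀ * X) *ᵥ w) ^ 2 := by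
    intro w
    have e := proj_sq Y hY (X *ᵥ w)
    rw [vnorm_iso X hX] at e
    have := h w
    rw [← Matrix.mulVec_mulVec]
    have h2 : vnorm ((1 - Y * Yᵀ) *ᵥ (X *ᵥ w)) ^ 2 ≤ (s * vnorm w) ^ 2 :=
      pow_le_pow_left₀ (vnorm_nonneg _) this 2
    nlinarith
  have hinj : Function.Injective (Matrix.mulVecLin (Yᵀ * X)) := by
    rw [injective_iff_map_eq_zero]
    intro w hw
    have hw' : (Yᵀ * X) *ᵥ w = 0 := hw
    have := hC w
    rw [hw', vnorm_sq 0] at this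
    simp only [dotProduct_zero] at this
    apply vnorm_eq_zero
    have h3 : vnorm w ^ 2 ≤ 0 := by
      by_contra hh
      push Not at hh
      nlinarith [mul_pos hs2 hh]
    nlinarith [vnorm_nonneg w]
  obtain ⟨w, hw⟩ := (LinearMap.injective_iff_surjective.mp hinj) (Yᵀ *ᵥ z)
  have hw' : (Yᵀ * X) *ᵥ w = Yᵀ *ᵥ z := hw
  set q := Yᵀ *ᵥ z with hq
  have k1 := hC w
  rw [hw'] at k1
  have k2 : vnorm q ^ 2 ≤ vnorm w * vnorm (Xᵀ *ᵥ (Y *ᵥ q)) := by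
    have : vnorm q ^ 2 = (Xᵀ *ᵥ (Y *ᵥ q)) ⬝ᵥ w := by
      have e0 : q ⬝ᵥ q = q ⬝ᵥ ((Yᵀ * X) *ᵥ w) := by rw [hw']
      rw [vnorm_sq, e0, dot_tr, Matrix.transpose_mul, Matrix.transpose_transpose,
        ← Matrix.mulVec_mulVec]
    rw [this, mul_comm]
    exact vdot_le _ _
  have k3 := proj_sq X hX (Y *ᵥ q)
  rw [vnorm_iso Y hY] at k3
  have k4 : vnorm q ^ 2 ≤ vnorm ((1 - X * Xᵀ) *ᵥ (Y *ᵥ q)) * vnorm z := by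
    have : vnorm q ^ 2 = ((1 - X * Xᵀ) *ᵥ (Y *ᵥ q)) ⬝ᵥ z := by
      rw [dotProduct_comm, dot_tr, proj_tr, Matrix.sub_mulVec, ← Matrix.mulVec_mulVec, hz]
      simp only [Matrix.mulVec_zero, sub_zero, Matrix.one_mulVec]
      rw [dot_tr, vnorm_sq]
    rw [this]
    exact vdot_le _ _
  have hq0 := vnorm_nonneg q
  rcases hq0.eq_or_lt with h0 | h0
  · rw [← h0]; exact mul_nonneg hs (vnorm_nonneg _)
  have k5 : (1 - s ^ 2) * vnorm q ^ 2 ≤ vnorm (Xᵀ *ᵥ (Y *ᵥ q)) ^ 2 := by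
    have e1 : (vnorm q ^ 2) ^ 2 ≤ (vnorm w * vnorm (Xᵀ *ᵥ (Y *ᵥ q))) ^ 2 :=
      pow_le_pow_left₀ (by positivity) k2 2
    have e2 : (1 - s ^ 2) * vnorm w ^ 2 * vnorm (Xᵀ *ᵥ (Y *ᵥ q)) ^ 2 ≤ vnorm q ^ 2 * vnorm (Xᵀ *ᵥ (Y *ᵥ q)) ^ 2 :=
      mul_le_mul_of_nonneg_right k1 (sq_nonneg _)
    have e3 : (1 - s ^ 2) * (vnorm q ^ 2) ^ 2 ≤ (1 - s ^ 2) * (vnorm w * vnorm (Xᵀ *ᵥ (Y *ᵥ q))) ^ 2 :=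
      mul_le_mul_of_nonneg_left e1 hs2.le
    have e4 : vnorm q ^ 2 * ((1 - s ^ 2) * vnorm q ^ 2) ≤ vnorm q ^ 2 * vnorm (Xᵀ *ᵥ (Y *ᵥ q)) ^ 2 := by
      linarith
    exact le_of_mul_le_mul_left e4 (by positivity)
  have k6 : vnorm ((1 - X * Xᵀ) *ᵥ (Y *ᵥ q)) ≤ s * vnorm q := by
    refine (abs_le_of_sq_le_sq' ?_ (by positivity)).2
    nlinarith
  have k7 : vnorm q * vnorm q ≤ vnorm q * (s * vnorm z) := by
    nlinarith [mul_le_mul_of_nonneg_right k6 (vnorm_nonneg z)]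
  exact le_of_mul_le_mul_left k7 h0

lemma lower {M N m : ℕ} (A : Matrix (Fin M) (Fin N) ℝ)
    (X Y : Matrix (Fin M) (Fin m) ℝ) (Z W : Matrix (Fin N) (Fin m) ℝ)
    (hX : Xᵀ * X = 1) (hY : Yᵀ * Y = 1) (hZ : Zᵀ * Z = 1)
    (D : Matrix (Fin m) (Fin m) ℝ) (h1 : A * Z = X * D) (h2 : Xᵀ * A = D * Zᵀ)
    (s t nA μ : ℝ) (hs : 0 ≤ s) (ht : 0 ≤ t) (hμ : 0 ≤ μ) (hμA : μ ≤ nA)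
    (hnA : ∀ y, vnorm (A *ᵥ y) ≤ nA * vnorm y)
    (hlow : ∀ y, Zᵀ *ᵥ y = 0 → μ * vnorm y ≤ vnorm (A *ᵥ y))
    (hsX : ∀ w, vnorm ((1 - Y * Yᵀ) *ᵥ (X *ᵥ w)) ≤ s * vnorm w)
    (htZ : ∀ w, vnorm ((1 - W * Wᵀ) *ᵥ (Z *ᵥ w)) ≤ t * vnorm w)
    (y : Fin N → ℝ) (hy : (1 - W * Wᵀ) *ᵥ y = y) :
    (μ - nA * (s + t) ^ 2) * vnorm y ≤ vnorm ((1 - Y * Yᵀ) *ᵥ (A *ᵥ y)) := by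
  have hA0 : 0 ≤ nA := hμ.trans hμA
  have ny := vnorm_nonneg y
  have triv : 1 ≤ (s + t) ^ 2 → (μ - nA * (s + t) ^ 2) * vnorm y ≤ vnorm ((1 - Y * Yᵀ) *ᵥ (A *ᵥ y)) := by
    intro h
    have : μ - nA * (s + t) ^ 2 ≤ 0 := by nlinarith
    exact (mul_nonpos_of_nonpos_of_nonneg this ny).trans (vnorm_nonneg _)
  rcases le_or_gt 1 s with hs1 | hs1
  · exact triv (by nlinarith)
  rcases le_or_gt 1 t with ht1 | ht1
  · exact triv (by nlinarith)
  set c := Zᵀ *ᵥ y with hc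
  have hcn : vnorm c ≤ t * vnorm y := by
    have e : vnorm c ^ 2 = ((1 - W * Wᵀ) *ᵥ (Z *ᵥ c)) ⬝ᵥ y := by
      rw [dotProduct_comm, dot_tr, proj_tr, hy, dot_tr, vnorm_sq]
    have e2 := (vdot_le ((1 - W * Wᵀ) *ᵥ (Z *ᵥ c)) y)
    rw [← e] at e2
    have e3 := mul_le_mul_of_nonneg_right (htZ c) ny
    rcases (vnorm_nonneg c).eq_or_lt with h0 | h0
    · rw [← h0]; positivity
    · have : vnorm c * vnorm c ≤ vnorm c * (t * vnorm y) := by nlinarith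
      exact le_of_mul_le_mul_left this h0
  set y' := (1 - Z * Zᵀ) *ᵥ y with hy'
  have e1 := proj_sq Z hZ y
  rw [← hy', ← hc] at e1
  have hZy' : Zᵀ *ᵥ y' = 0 := by
    rw [hy', Matrix.mulVec_mulVec, Matrix.mul_sub, ← Matrix.mul_assoc, hZ]; simp
  have hy'n : (1 - t ^ 2) * vnorm y ≤ vnorm y' := by
    have hh : vnorm c ^ 2 ≤ (t * vnorm y) ^ 2 := pow_le_pow_left₀ (vnorm_nonneg _) hcn 2
    refine (abs_le_of_sq_le_sq' ?_ (vnorm_nonneg _)).2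
    have : (1 - t ^ 2) ^ 2 ≤ 1 - t ^ 2 := by nlinarith [sq_nonneg t, mul_nonneg (sq_nonneg t) (show 0 ≤ 1 - t ^ 2 by nlinarith)]
    nlinarith [mul_le_mul_of_nonneg_right this (sq_nonneg (vnorm y))]
  set z := A *ᵥ y' with hz
  have hzn := hlow y' hZy'
  rw [← hz] at hzn
  have hXz : Xᵀ *ᵥ z = 0 := by
    rw [hz, Matrix.mulVec_mulVec, h2, ← Matrix.mulVec_mulVec, hZy', Matrix.mulVec_zero]
  have hg := gap X Y hX hY s hs hsX z hXz
  have e3 := proj_sq Y hY z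
  have hPz : (1 - s ^ 2) * vnorm z ≤ vnorm ((1 - Y * Yᵀ) *ᵥ z) := by
    have hh : vnorm (Yᵀ *ᵥ z) ^ 2 ≤ (s * vnorm z) ^ 2 := pow_le_pow_left₀ (vnorm_nonneg _) hg 2
    refine (abs_le_of_sq_le_sq' ?_ (vnorm_nonneg _)).2
    have : (1 - s ^ 2) ^ 2 ≤ 1 - s ^ 2 := by nlinarith [sq_nonneg s, mul_nonneg (sq_nonneg s) (show 0 ≤ 1 - s ^ 2 by nlinarith)]
    nlinarith [mul_le_mul_of_nonneg_right this (sq_nonneg (vnorm z))]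
  have hDc : vnorm (D *ᵥ c) ≤ nA * vnorm c := by
    rw [← vnorm_iso X hX, Matrix.mulVec_mulVec, ← h1, ← Matrix.mulVec_mulVec, ← vnorm_iso Z hZ c]
    exact hnA _
  have hsp : (1 - Y * Yᵀ) *ᵥ z = (1 - Y * Yᵀ) *ᵥ (A *ᵥ y) + -((1 - Y * Yᵀ) *ᵥ (X *ᵥ (D *ᵥ c))) := by
    have : y = y' + Z *ᵥ c := by
      rw [hy', hc, Matrix.sub_mulVec, Matrix.one_mulVec, Matrix.mulVec_mulVec]; simp
    have h4 : A *ᵥ y = z + X *ᵥ (D *ᵥ c) := by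
      conv_lhs => rw [this]
      rw [Matrix.mulVec_add, Matrix.mulVec_mulVec _ A Z, h1, ← Matrix.mulVec_mulVec]
    rw [h4, Matrix.mulVec_add]; simp
  have h5 := vnorm_add_le ((1 - Y * Yᵀ) *ᵥ (A *ᵥ y)) (-((1 - Y * Yᵀ) *ᵥ (X *ᵥ (D *ᵥ c))))
  rw [← hsp, vnorm_neg] at h5
  have h6 := hsX (D *ᵥ c)
  have h7 : s * vnorm (D *ᵥ c) ≤ s * (nA * (t * vnorm y)) :=
    mul_le_mul_of_nonneg_left (hDc.trans (mul_le_mul_of_nonneg_left hcn hA0)) hs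
  have hs' : 0 ≤ 1 - s ^ 2 := by nlinarith
  have h8 : (1 - s ^ 2) * (μ * ((1 - t ^ 2) * vnorm y)) ≤ (1 - s ^ 2) * vnorm z :=
    mul_le_mul_of_nonneg_left ((mul_le_mul_of_nonneg_left hy'n hμ).trans hzn) hs'
  have h9 : (μ - nA * (s + t) ^ 2) ≤ (1 - s ^ 2) * (μ * (1 - t ^ 2)) - s * nA * t := by
    nlinarith [mul_nonneg hμ (mul_nonneg (sq_nonneg s) (sq_nonneg t)), mul_nonneg (sub_nonneg.mpr hμA) (sq_nonneg s),
      mul_nonneg (sub_nonneg.mpr hμA) (sq_nonneg t), mul_nonneg hA0 (mul_nonneg hs ht)]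
  nlinarith [mul_le_mul_of_nonneg_right h9 ny]

lemma cheb_abs_le (k : ℕ) (x : ℝ) (hx : |x| ≤ 1) :
    |(Polynomial.Chebyshev.T ℝ (k : ℤ)).eval x| ≤ 1 := by
  have h := abs_le.mp hx
  rw [← Real.cos_arccos h.1 h.2, Polynomial.Chebyshev.T_real_cos]
  exact Real.abs_cos_le_one _

lemma cheb_val (ρ : ℝ) (hρ : 0 < ρ) (k : ℕ) :
    (Polynomial.Chebyshev.T ℝ (k : ℤ)).eval ((ρ + ρ⁻¹) / 2) = (ρ ^ k + (ρ ^ k)⁻¹) / 2 := by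
  have h : (ρ + ρ⁻¹) / 2 = Real.cosh (Real.log ρ) := by
    rw [Real.cosh_log hρ]
  rw [h, Polynomial.Chebyshev.T_real_cosh]
  have : ((k : ℤ) : ℝ) * Real.log ρ = Real.log (ρ ^ k) := by simp [Real.log_pow]
  rw [this, Real.cosh_log (by positivity)]

lemma cheb_poly (α β : ℝ) (hα : 0 < α) (hαβ : α ≤ β) (k : ℕ) :
    ∃ q : Polynomial ℝ, q.natDegree ≤ k ∧ q.eval 0 = 1 ∧
      ∀ t, α ≤ t → t ≤ β → |q.eval t| ≤ 2 * (1 - 2 / (1 + Real.sqrt (β / α))) ^ k := by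
  rcases hαβ.eq_or_lt with h | h
  · subst h
    refine ⟨(1 - Polynomial.C (α⁻¹) * Polynomial.X) ^ k, ?_, by simp, ?_⟩
    · refine Polynomial.natDegree_pow_le.trans ?_
      have : (1 - Polynomial.C (α⁻¹) * Polynomial.X : Polynomial ℝ).natDegree ≤ 1 := by
        compute_degree
      nlinarith
    · intro t h1 h2
      have : t = α := le_antisymm h2 h1
      subst this
      have e : (1 : ℝ) - 2 / (1 + Real.sqrt (t / t)) = 0 := by
        rw [div_self hα.ne']; norm_num
      rw [e]
      simp only [Polynomial.eval_pow, Polynomial.eval_sub, Polynomial.eval_one, Polynomial.eval_mul,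
        Polynomial.eval_C, Polynomial.eval_X, inv_mul_cancel₀ hα.ne', sub_self]
      rcases k with _ | k <;> simp
  · set κ := Real.sqrt (β / α) with hκ
    have hκ2 : κ ^ 2 = β / α := Real.sq_sqrt (div_nonneg (by linarith) hα.le)
    have hκ1 : 1 < κ := by
      rw [hκ, Real.lt_sqrt (by norm_num), lt_div_iff₀ hα]; linarith
    have hβ : β = κ ^ 2 * α := by rw [hκ2]; field_simp
    set ρ := (κ + 1) / (κ - 1) with hρ
    have hk1 : 0 < κ - 1 := by linarith
    have hρ0 : 0 < ρ := by positivity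
    have hval : (ρ + ρ⁻¹) / 2 = (β + α) / (β - α) := by
      have : β - α = (κ ^ 2 - 1) * α := by rw [hβ]; ring
      have h3 : κ ^ 2 - 1 ≠ 0 := by nlinarith
      have h4 : κ + 1 ≠ 0 := by linarith
      rw [this, hβ, hρ]
      field_simp
      ring
    have hrate : 1 - 2 / (1 + κ) = ρ⁻¹ := by
      rw [hρ]; field_simp; ring
    have hpos : 0 < (ρ ^ k + (ρ ^ k)⁻¹) / 2 := by positivity
    have hba : 0 < β - α := by linarith
    refine ⟨Polynomial.C (((ρ ^ k + (ρ ^ k)⁻¹) / 2)⁻¹) * (Polynomial.Chebyshev.T ℝ (k : ℤ)).comp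
      (Polynomial.C ((β + α) / (β - α)) - Polynomial.C (2 / (β - α)) * Polynomial.X), ?_, ?_, ?_⟩
    · refine (Polynomial.natDegree_C_mul_le _ _).trans ?_
      refine Polynomial.natDegree_comp_le.trans ?_
      rw [Polynomial.Chebyshev.natDegree_T]
      have : (Polynomial.C ((β + α) / (β - α)) - Polynomial.C (2 / (β - α)) * Polynomial.X : Polynomial ℝ).natDegree ≤ 1 := by
        compute_degree
      simp only [Int.natAbs_natCast]
      nlinarith
    · simp only [Polynomial.eval_mul, Polynomial.eval_C, Polynomial.eval_comp, Polynomial.eval_sub,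
        Polynomial.eval_X, mul_zero, sub_zero]
      rw [← hval, cheb_val ρ hρ0, inv_mul_cancel₀ hpos.ne']
    · intro t h1 h2
      simp only [Polynomial.eval_mul, Polynomial.eval_C, Polynomial.eval_comp, Polynomial.eval_sub,
        Polynomial.eval_X]
      have hx : |(β + α) / (β - α) - 2 / (β - α) * t| ≤ 1 := by
        have : (β + α) / (β - α) - 2 / (β - α) * t = (β + α - 2 * t) / (β - α) := by ring
        rw [this, abs_div, abs_of_pos hba, div_le_one hba, abs_le]
        constructor <;> linarith
      rw [abs_mul, abs_of_pos (inv_pos.mpr hpos), hrate]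
      refine (mul_le_of_le_one_right (inv_pos.mpr hpos).le (cheb_abs_le k _ hx)).trans ?_
      rw [inv_pow, inv_div, div_eq_mul_inv]
      have : 0 < ρ ^ k := by positivity
      gcongr
      have : 0 < (ρ ^ k)⁻¹ := by positivity
      linarith

lemma aeval_eig {ι : Type*} [Fintype ι] [DecidableEq ι] (C : Matrix ι ι ℝ) (hC : Cᵀ = C) (p : Polynomial ℝ)
    (v : ι → ℝ) (μ : ℝ) (hv : C *ᵥ v = μ • v) (r : ι → ℝ) :
    v ⬝ᵥ ((Polynomial.aeval C p) *ᵥ r) = p.eval μ * (v ⬝ᵥ r) := by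
  induction p using Polynomial.induction_on' with
  | add p q hp hq => simp [Matrix.add_mulVec, dotProduct_add, hp, hq, add_mul]
  | monomial n a =>
    simp only [Polynomial.aeval_monomial, Polynomial.eval_monomial]
    rw [← Algebra.smul_def, Matrix.smul_mulVec, dotProduct_smul, smul_eq_mul, mul_assoc]
    congr 1
    induction n with
    | zero => simp
    | succ n ih =>
      rw [pow_succ', ← Matrix.mulVec_mulVec, dot_tr, hC, hv, smul_dotProduct, ih, smul_eq_mul]
      ring

lemma spec_bound {ι : Type*} [Fintype ι] [DecidableEq ι] (C : Matrix ι ι ℝ) (hC : Cᵀ = C) (p : Polynomial ℝ)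
    (r : ι → ℝ) (K : ℝ) (hK : 0 ≤ K)
    (h : ∀ (v : ι → ℝ) (μ : ℝ), C *ᵥ v = μ • v → v ⬝ᵥ r ≠ 0 → |p.eval μ| ≤ K) :
    vnorm ((Polynomial.aeval C p) *ᵥ r) ≤ K * vnorm r := by
  have hH : C.IsHermitian := by
    rw [Matrix.IsHermitian, Matrix.conjTranspose_eq_transpose_of_trivial, hC]
  let b := hH.eigenvectorBasis
  have hn : ∀ x : ι → ℝ, vnorm x ^ 2 = ∑ i, ((b i : ι → ℝ) ⬝ᵥ x) ^ 2 := by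
    intro x
    rw [vnorm_eq, ← b.sum_sq_norm_inner_right]
    refine Finset.sum_congr rfl fun i _ => ?_
    rw [Real.norm_eq_abs, sq_abs, EuclideanSpace.inner_eq_star_dotProduct]
    simp [dotProduct_comm]
  refine (abs_le_of_sq_le_sq' ?_ (mul_nonneg hK (vnorm_nonneg _))).2
  rw [mul_pow, hn, hn, Finset.mul_sum]
  refine Finset.sum_le_sum fun i _ => ?_
  have hv : C *ᵥ (b i : ι → ℝ) = hH.eigenvalues i • (b i : ι → ℝ) := hH.mulVec_eigenvectorBasis i
  rw [aeval_eig C hC p _ _ hv, mul_pow]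
  by_cases h0 : (b i : ι → ℝ) ⬝ᵥ r = 0
  · rw [h0]; simp
  · have := h _ _ hv h0
    gcongr ?_ * _
    rw [← sq_abs]
    gcongr

lemma krylov_poly {ι : Type*} [Fintype ι] [DecidableEq ι] (C : Matrix ι ι ℝ) (p : Polynomial ℝ)
    (r : ι → ℝ) (j : ℕ) (hd : p.natDegree ≤ j) (h1 : p.eval 0 = 1) :
    ∃ w ∈ Krylov C r j, C *ᵥ w + r = (Polynomial.aeval C p) *ᵥ r := by
  refine ⟨(Polynomial.aeval C p.divX) *ᵥ r, ?_, ?_⟩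
  · rw [Polynomial.aeval_def, Polynomial.eval₂_eq_sum, Polynomial.sum_def, Matrix.sum_mulVec]
    refine Submodule.sum_mem _ fun i hi => ?_
    rw [← Algebra.smul_def, Matrix.smul_mulVec]
    refine Submodule.smul_mem _ _ (Submodule.subset_span ⟨i, ?_, rfl⟩)
    rw [Polynomial.mem_support_iff, Polynomial.coeff_divX] at hi
    have := Polynomial.le_natDegree_of_ne_zero hi
    omega
  · conv_rhs => rw [← Polynomial.divX_mul_X_add p]
    rw [Polynomial.coeff_zero_eq_eval_zero, h1, mul_comm]
    simp [Matrix.add_mulVec, Matrix.mulVec_mulVec]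

lemma vnorm_tr_le {ι κ : Type*} [Fintype ι] [Fintype κ] (A : Matrix ι κ ℝ) (c : ℝ)
    (h : ∀ y, vnorm (A *ᵥ y) ≤ c * vnorm y) (hc : 0 ≤ c) (x : ι → ℝ) : vnorm (Aᵀ *ᵥ x) ≤ c * vnorm x := by
  have e : vnorm (Aᵀ *ᵥ x) ^ 2 = x ⬝ᵥ (A *ᵥ (Aᵀ *ᵥ x)) := by rw [vnorm_sq, dot_tr A]
  have e2 := vdot_le x (A *ᵥ (Aᵀ *ᵥ x))
  rw [← e] at e2
  have e3 := mul_le_mul_of_nonneg_left (h (Aᵀ *ᵥ x)) (vnorm_nonneg x)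
  rcases (vnorm_nonneg (Aᵀ *ᵥ x)).eq_or_lt with h0 | h0
  · rw [← h0]; exact mul_nonneg hc (vnorm_nonneg _)
  · refine le_of_mul_le_mul_left ?_ h0
    nlinarith

lemma proj_le {ι κ : Type*} [Fintype ι] [Fintype κ] [DecidableEq ι] [DecidableEq κ] (Q : Matrix ι κ ℝ)
    (hQ : Qᵀ * Q = 1) (x : ι → ℝ) : vnorm ((1 - Q * Qᵀ) *ᵥ x) ≤ vnorm x := by
  refine (abs_le_of_sq_le_sq' ?_ (vnorm_nonneg _)).2
  rw [proj_sq Q hQ]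
  nlinarith [sq_nonneg (vnorm (Qᵀ *ᵥ x))]

section svd
variable {M N : ℕ} (hMN : N ≤ M) (A : Matrix (Fin M) (Fin N) ℝ)
    (U : Matrix (Fin M) (Fin M) ℝ) (V : Matrix (Fin N) (Fin N) ℝ)
    (hU : Uᵀ * U = 1) (hV : Vᵀ * V = 1)
    (σ : Fin N → ℝ)
    (S : Matrix (Fin M) (Fin N) ℝ)
    (hS : ∀ i j, S i j = if (i : ℕ) = (j : ℕ) then σ j else 0)
    (hA : A = U * S * Vᵀ)

include hMN hU hV hS hA in
lemma svd_norm (y : Fin N → ℝ) :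
    vnorm (A *ᵥ y) ^ 2 = ∑ j, σ j ^ 2 * (Vᵀ *ᵥ y) j ^ 2 := by
  have hSS : Sᵀ * S = Matrix.diagonal (fun j => σ j ^ 2) := by
    ext j k
    rw [Matrix.mul_apply, Finset.sum_eq_single (Fin.castLE hMN j)]
    · simp only [Matrix.transpose_apply, hS, Matrix.diagonal_apply, Fin.val_castLE, if_true]
      by_cases h : j = k
      · subst h; simp [sq]
      · have : ¬ ((j : ℕ) = k) := fun h' => h (Fin.ext h')
        simp [h, this]
    · intro i _ hi
      have : ¬ ((i : ℕ) = j) := fun h' => hi (Fin.ext h')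
      simp [hS, this]
    · simp
  rw [hA, Matrix.mul_assoc, ← Matrix.mulVec_mulVec, vnorm_iso U hU, ← Matrix.mulVec_mulVec, vnorm_sq,
    dot_tr, Matrix.mulVec_mulVec, hSS]
  simp only [dotProduct, Matrix.mulVec_diagonal]
  exact Finset.sum_congr rfl fun j _ => by ring

include hV in
lemma svd_norm_y (y : Fin N → ℝ) : vnorm y ^ 2 = ∑ j, (Vᵀ *ᵥ y) j ^ 2 := by
  have hV' : V * Vᵀ = 1 := mul_eq_one_comm.mp hV
  rw [← vnorm_iso Vᵀ (by rw [Matrix.transpose_transpose, hV']) y, vnorm_sq]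
  simp [dotProduct, sq]

include hMN hU hV hS hA in
lemma svd_up (hσ : ∀ i, 0 ≤ σ i) (c : ℝ) (hc0 : 0 ≤ c) (hc : ∀ i, σ i ≤ c) (y : Fin N → ℝ) :
    vnorm (A *ᵥ y) ≤ c * vnorm y := by
  refine (abs_le_of_sq_le_sq' ?_ (mul_nonneg hc0 (vnorm_nonneg _))).2
  rw [mul_pow, svd_norm hMN A U V hU hV σ S hS hA, svd_norm_y V hV y, Finset.mul_sum]
  refine Finset.sum_le_sum fun j _ => ?_
  have := hσ j
  have := hc j
  gcongr

include hMN hU hV hS hA in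
lemma svd_low {m : ℕ} (hmN : m ≤ N) (c : ℝ) (hc0 : 0 ≤ c) (hc : ∀ i : Fin N, m ≤ (i : ℕ) → c ≤ σ i)
    (Vm : Matrix (Fin N) (Fin m) ℝ) (hVm : ∀ i j, Vm i j = V i (Fin.castLE hmN j))
    (y : Fin N → ℝ) (hy : Vmᵀ *ᵥ y = 0) :
    c * vnorm y ≤ vnorm (A *ᵥ y) := by
  refine (abs_le_of_sq_le_sq' ?_ (vnorm_nonneg _)).2
  rw [mul_pow, svd_norm hMN A U V hU hV σ S hS hA, svd_norm_y V hV y, Finset.mul_sum]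
  refine Finset.sum_le_sum fun j _ => ?_
  rcases lt_or_ge (j : ℕ) m with h | h
  · have e : (Vᵀ *ᵥ y) j = (Vmᵀ *ᵥ y) ⟨j, h⟩ := by
      simp only [Matrix.mulVec, dotProduct, Matrix.transpose_apply, hVm]
      rfl
    rw [e, hy]; simp
  · have := hc j h
    gcongr

include hMN hV hS hA in
lemma svd_AV {m : ℕ} (hmN : m ≤ N)
    (Um : Matrix (Fin M) (Fin m) ℝ) (hUm : ∀ i j, Um i j = U i (Fin.castLE (hmN.trans hMN) j))
    (Vm : Matrix (Fin N) (Fin m) ℝ) (hVm : ∀ i j, Vm i j = V i (Fin.castLE hmN j)) :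
    A * Vm = Um * Matrix.diagonal (fun j => σ (Fin.castLE hmN j)) := by
  have h : A * V = U * S := by rw [hA, Matrix.mul_assoc, hV, Matrix.mul_one]
  ext i j
  have e : (A * Vm) i j = (A * V) i (Fin.castLE hmN j) := by
    simp [Matrix.mul_apply, hVm]
  rw [e, h, Matrix.mul_diagonal, hUm, Matrix.mul_apply,
    Finset.sum_eq_single (Fin.castLE (hmN.trans hMN) j)]
  · simp [hS]
  · intro k _ hk
    have : ¬ ((k : ℕ) = j) := fun h' => hk (Fin.ext h')
    simp [hS, this]
  · simp

include hMN hU hS hA in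
lemma svd_UA {m : ℕ} (hmN : m ≤ N)
    (Um : Matrix (Fin M) (Fin m) ℝ) (hUm : ∀ i j, Um i j = U i (Fin.castLE (hmN.trans hMN) j))
    (Vm : Matrix (Fin N) (Fin m) ℝ) (hVm : ∀ i j, Vm i j = V i (Fin.castLE hmN j)) :
    Umᵀ * A = Matrix.diagonal (fun j => σ (Fin.castLE hmN j)) * Vmᵀ := by
  have h : Uᵀ * A = S * Vᵀ := by rw [hA, Matrix.mul_assoc, ← Matrix.mul_assoc, hU, Matrix.one_mul]
  ext i j
  have e : (Umᵀ * A) i j = (Uᵀ * A) (Fin.castLE (hmN.trans hMN) i) j := by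
    simp [Matrix.mul_apply, hUm]
  rw [e, h, Matrix.diagonal_mul, Matrix.transpose_apply, hVm, Matrix.mul_apply,
    Finset.sum_eq_single (Fin.castLE hmN i)]
  · simp [hS]
  · intro k _ hk
    have : ¬ ((i : ℕ) = k) := fun h' => hk (Fin.ext h'.symm)
    simp [hS, this]
  · simp
end svd

lemma cols_orth {M m : ℕ} (h : m ≤ M) (U : Matrix (Fin M) (Fin M) ℝ) (hU : Uᵀ * U = 1)
    (Um : Matrix (Fin M) (Fin m) ℝ) (hUm : ∀ i j, Um i j = U i (Fin.castLE h j)) : Umᵀ * Um = 1 := by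
  ext i j
  have e : (Umᵀ * Um) i j = (Uᵀ * U) (Fin.castLE h i) (Fin.castLE h j) := by
    simp [Matrix.mul_apply, hUm]
  rw [e, hU]
  simp [Matrix.one_apply]

lemma eig_bd {ι κ : Type*} [Fintype ι] [Fintype κ] (A : Matrix ι κ ℝ)
    (PU : Matrix ι ι ℝ) (PV : Matrix κ κ ℝ) (hPU : PUᵀ = PU) (hPV : PVᵀ = PV)
    (cU : ∀ x, vnorm (PU *ᵥ x) ≤ vnorm x) (cV : ∀ x, vnorm (PV *ᵥ x) ≤ vnorm x)
    (x : ι → ℝ) (y : κ → ℝ) (l a c : ℝ) (ha : 0 < a) (hc : 0 ≤ c)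
    (hx : PU *ᵥ x = x) (hy : PV *ᵥ y = y)
    (h1 : PU *ᵥ (A *ᵥ y) = l • x) (h2 : PV *ᵥ (Aᵀ *ᵥ x) = l • y)
    (hne : x ≠ 0 ∨ y ≠ 0) (hA : ∀ y, vnorm (A *ᵥ y) ≤ c * vnorm y)
    (hlow : a * vnorm y ≤ vnorm (PU *ᵥ (A *ᵥ y))) :
    |l| ≤ c ∧ (a ≤ |l| ∨ (l = 0 ∧ y = 0 ∧ x ≠ 0)) := by
  have nx := vnorm_nonneg x
  have ny := vnorm_nonneg y
  have b1 : |l| * vnorm x ≤ c * vnorm y := by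
    rw [← vnorm_smul, ← h1]; exact (cU _).trans (hA y)
  have b2 : |l| * vnorm y ≤ c * vnorm x := by
    rw [← vnorm_smul, ← h2]; exact (cV _).trans (vnorm_tr_le A c hA hc x)
  have hpos : 0 < vnorm x + vnorm y := by
    rcases hne with h | h
    · have : vnorm x ≠ 0 := fun h' => h (vnorm_eq_zero h')
      have := lt_of_le_of_ne nx this.symm
      linarith
    · have : vnorm y ≠ 0 := fun h' => h (vnorm_eq_zero h')
      have := lt_of_le_of_ne ny this.symm
      linarith
  refine ⟨?_, ?_⟩
  · refine le_of_mul_le_mul_right ?_ hpos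
    linarith
  by_cases hy0 : y = 0
  · right
    have hx0 : x ≠ 0 := by tauto
    refine ⟨?_, hy0, hx0⟩
    rw [hy0] at h1
    simp only [Matrix.mulVec_zero] at h1
    exact (smul_eq_zero.mp h1.symm).resolve_right hx0
  · left
    have hny : 0 < vnorm y := lt_of_le_of_ne ny fun h' => hy0 (vnorm_eq_zero h'.symm)
    rw [h1, vnorm_smul] at hlow
    have hl : l ≠ 0 := by
      intro h
      rw [h] at hlow
      simp only [abs_zero, zero_mul] at hlow
      nlinarith [mul_pos ha hny]
    have e : l * vnorm x ^ 2 = l * vnorm y ^ 2 := by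
      have e1 : l * vnorm x ^ 2 = x ⬝ᵥ (A *ᵥ y) := by
        rw [vnorm_sq, ← smul_eq_mul, ← dotProduct_smul, ← h1, dot_tr, hPU, hx]
      have e2 : l * vnorm y ^ 2 = y ⬝ᵥ (Aᵀ *ᵥ x) := by
        rw [vnorm_sq, ← smul_eq_mul, ← dotProduct_smul, ← h2, dot_tr, hPV, hy]
      rw [e1, e2, dot_tr, dotProduct_comm]
    have e3 := mul_left_cancel₀ hl e
    have e4 : vnorm x = vnorm y := (sq_eq_sq₀ nx ny).mp e3
    rw [e4] at hlow
    exact le_of_mul_le_mul_right hlow hny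

/-- Theorem 4.4(ii). MINRES bound for the preconditioned JDSVD correction
equation with approximate singular subspaces, in the case
`σ_min ≤ τ < (σ_min + σ_min,m+1)/2`. -/
theorem minres_bound_precond_approx_smallest {M N m : ℕ} (hN : 2 ≤ N) (hMN : N ≤ M)
    (hm : 1 ≤ m) (hmN : m < N)
    (A : Matrix (Fin M) (Fin N) ℝ)
    (U : Matrix (Fin M) (Fin M) ℝ) (V : Matrix (Fin N) (Fin N) ℝ)
    (hU : Uᵀ * U = 1) (hV : Vᵀ * V = 1)
    (σ : Fin N → ℝ) (hσ : ∀ i, 0 ≤ σ i)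
    (S : Matrix (Fin M) (Fin N) ℝ)
    (hS : ∀ i j, S i j = if (i : ℕ) = (j : ℕ) then σ j else 0)
    (hA : A = U * S * Vᵀ)
    (τ : ℝ) (hτ0 : 0 < τ)
    (hclosest : ∀ i j : Fin N, (i : ℕ) < m → m ≤ (j : ℕ) → |σ i - τ| ≤ |σ j - τ|)
    (σmax σmin σminm1 : ℝ)
    (hσmax : IsGreatest (Set.range σ) σmax)
    (hσmin : IsLeast (Set.range σ) σmin)
    (hσminm1 : IsLeast (σ '' {i : Fin N | m ≤ (i : ℕ)}) σminm1)
    (hτ1 : σmin ≤ τ) (hτ2 : τ < (σmin + σminm1) / 2)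
    (Um : Matrix (Fin M) (Fin m) ℝ)
    (hUm : ∀ i j, Um i j = U i ⟨(j : ℕ), by have := j.isLt; omega⟩)
    (Vm : Matrix (Fin N) (Fin m) ℝ)
    (hVm : ∀ i j, Vm i j = V i ⟨(j : ℕ), by have := j.isLt; omega⟩)
    (Ut : Matrix (Fin M) (Fin m) ℝ) (Vt : Matrix (Fin N) (Fin m) ℝ)
    (hUt : Utᵀ * Ut = 1) (hVt : Vtᵀ * Vt = 1)
    (δ : ℝ)
    (hδ : δ = specNorm A *
      (specNorm ((1 - Ut * Utᵀ) * Um) + specNorm ((1 - Vt * Vtᵀ) * Vm)) ^ 2)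
    (hδsmall : δ < σminm1 - τ)
    (B P Bm : Matrix (Fin M ⊕ Fin N) (Fin M ⊕ Fin N) ℝ)
    (hB : B = Matrix.fromBlocks ((-τ) • 1) A Aᵀ ((-τ) • 1))
    (hP : P = Matrix.fromBlocks (1 - Ut * Utᵀ) 0 0 (1 - Vt * Vtᵀ))
    (hBm : Bm = P * B * P)
    (r : Fin M ⊕ Fin N → ℝ) (hr : P *ᵥ r = r) :
    ∀ j : ℕ, min 1 (M - N) ≤ j → ∃ w ∈ Krylov Bm r j,
      vnorm (Bm *ᵥ w + r) ≤
        2 * ((σmax + δ) / τ) ^ (min 1 (M - N)) *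
          (1 - 2 / (1 + Real.sqrt (((σmax + δ) ^ 2 - τ ^ 2) / ((σminm1 - δ) ^ 2 - τ ^ 2)))) ^
            ((j - min 1 (M - N)) / 2) * vnorm r := by
  -- basic SVD consequences
  have hmN' : m ≤ N := hmN.le
  have hUm' : ∀ i j, Um i j = U i (Fin.castLE (hmN'.trans hMN) j) := fun i j => hUm i j
  have hVm' : ∀ i j, Vm i j = V i (Fin.castLE hmN' j) := fun i j => hVm i j
  have hUmo := cols_orth _ U hU Um hUm'
  have hVmo := cols_orth _ V hV Vm hVm'
  have hσle : ∀ i, σ i ≤ σmax := fun i => hσmax.2 ⟨i, rfl⟩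
  have hσ1 : ∀ i : Fin N, m ≤ (i : ℕ) → σminm1 ≤ σ i := fun i hi => hσminm1.2 ⟨i, hi, rfl⟩
  have hσm0 : 0 ≤ σminm1 := by
    obtain ⟨i, _, hi⟩ := hσminm1.1
    rw [← hi]; exact hσ i
  have hσmm : σminm1 ≤ σmax := (hσ1 ⟨m, hmN⟩ le_rfl).trans (hσle _)
  have hσM0 : 0 ≤ σmax := hσm0.trans hσmm
  have hup := svd_up hMN A U V hU hV σ S hS hA hσ σmax hσM0 hσle
  have hlow := svd_low hMN A U V hU hV σ S hS hA hmN' σminm1 hσm0 hσ1 Vm hVm'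
  have hAV := svd_AV hMN A U V hV σ S hS hA hmN' Um hUm' Vm hVm'
  have hUA := svd_UA hMN A U V hU σ S hS hA hmN' Um hUm' Vm hVm'
  have hnA := vnorm_mulVec_le A
  have hμA : σminm1 ≤ specNorm A := by
    let y : Fin N → ℝ := V *ᵥ Pi.single ⟨m, hmN⟩ 1
    have hy1 : vnorm y = 1 := by
      have : vnorm y ^ 2 = 1 := by
        rw [show vnorm y = vnorm (Pi.single ⟨m, hmN⟩ 1 : Fin N → ℝ) from vnorm_iso V hV _, vnorm_sq]
        simp
      nlinarith [vnorm_nonneg y]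
    have hy0 : Vmᵀ *ᵥ y = 0 := by
      ext j
      have e : (Vmᵀ *ᵥ y) j = (Vᵀ *ᵥ y) (Fin.castLE hmN' j) := by
        simp only [Matrix.mulVec, dotProduct, Matrix.transpose_apply, hVm']
      rw [e]
      have hne : Fin.castLE hmN' j ≠ ⟨m, hmN⟩ := by
        intro h
        have := congrArg Fin.val h
        have h2 := j.isLt
        simp only [Fin.val_castLE] at this
        omega
      have e2 : Vᵀ *ᵥ y = Pi.single ⟨m, hmN⟩ 1 := by
        change Vᵀ *ᵥ (V *ᵥ Pi.single ⟨m, hmN⟩ 1) = _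
        rw [Matrix.mulVec_mulVec, hV, Matrix.one_mulVec]
      rw [e2, Pi.single_eq_of_ne hne]
      rfl
    have h1 := hlow y hy0
    have h2 := hnA y
    rw [hy1] at h1 h2
    linarith
  set s := specNorm ((1 - Ut * Utᵀ) * Um) with hs
  set t := specNorm ((1 - Vt * Vtᵀ) * Vm) with ht
  have hs0 : 0 ≤ s := specNorm_nonneg _
  have ht0 : 0 ≤ t := specNorm_nonneg _
  have hδ0 : 0 ≤ δ := by
    rw [hδ]; exact mul_nonneg (specNorm_nonneg _) (sq_nonneg _)
  have hsX : ∀ w, vnorm ((1 - Ut * Utᵀ) *ᵥ (Um *ᵥ w)) ≤ s * vnorm w := fun w => by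
    rw [Matrix.mulVec_mulVec]; exact vnorm_mulVec_le _ w
  have htZ : ∀ w, vnorm ((1 - Vt * Vtᵀ) *ᵥ (Vm *ᵥ w)) ≤ t * vnorm w := fun w => by
    rw [Matrix.mulVec_mulVec]; exact vnorm_mulVec_le _ w
  have ha : 0 < σminm1 - δ := by linarith
  have L1 : ∀ y, (1 - Vt * Vtᵀ) *ᵥ y = y →
      (σminm1 - δ) * vnorm y ≤ vnorm ((1 - Ut * Utᵀ) *ᵥ (A *ᵥ y)) := by
    intro y hy
    rw [hδ]
    exact lower A Um Ut Vm Vt hUmo hUt hVmo _ hAV hUA s t _ σminm1 hs0 ht0 hσm0 hμA hnA hlow hsX htZ y hy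
  have L2 : M = N → ∀ x, (1 - Ut * Utᵀ) *ᵥ x = x →
      (σminm1 - δ) * vnorm x ≤ vnorm ((1 - Vt * Vtᵀ) *ᵥ (Aᵀ *ᵥ x)) := by
    intro hMNe x hx
    subst hMNe
    rw [hδ, add_comm s t]
    refine lower Aᵀ Vm Vt Um Ut hVmo hVt hUmo
      (Matrix.diagonal (fun j => σ (Fin.castLE hmN' j))) ?_ ?_ t s _ σminm1 ht0 hs0 hσm0 hμA
      (vnorm_tr_le A _ hnA (specNorm_nonneg _)) ?_ htZ hsX x hx
    · have := congrArg Matrix.transpose hUA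
      simpa [Matrix.transpose_mul] using this
    · have := congrArg Matrix.transpose hAV
      simpa [Matrix.transpose_mul] using this
    · refine svd_low le_rfl Aᵀ V U hV hU σ Sᵀ ?_ ?_ hmN' σminm1 hσm0 hσ1 Um hUm'
      · intro i j
        rw [Matrix.transpose_apply, hS]
        by_cases h : (i : ℕ) = j
        · have : i = j := Fin.ext h
          subst this; simp
        · have h' : ¬ ((j : ℕ) = i) := fun e => h e.symm
          simp [h, h']
      · rw [hA]; simp [Matrix.transpose_mul, Matrix.mul_assoc]
  -- structure of the projected matrix
  have hPt : Pᵀ = P := by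
    rw [hP, Matrix.fromBlocks_transpose, proj_tr, proj_tr]; simp
  have hPP : P * P = P := by
    rw [hP, Matrix.fromBlocks_multiply, proj_idem Ut hUt, proj_idem Vt hVt]; simp
  have hBt : Bᵀ = B := by
    rw [hB, Matrix.fromBlocks_transpose]; simp
  have hBmt : Bmᵀ = Bm := by
    rw [hBm, Matrix.transpose_mul, Matrix.transpose_mul, hPt, hBt, Matrix.mul_assoc]
  have key : ∀ (v : Fin M ⊕ Fin N → ℝ) (μ : ℝ), Bm *ᵥ v = μ • v → v ⬝ᵥ r ≠ 0 →
      |μ + τ| ≤ σmax ∧ (σminm1 - δ ≤ |μ + τ| ∨ (μ + τ = 0 ∧ M ≠ N)) := by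
    intro v μ hv hvr
    set u := P *ᵥ v with hu
    have hPu : P *ᵥ u = u := by rw [hu, Matrix.mulVec_mulVec, hPP]
    have hu0 : u ≠ 0 := by
      intro h
      apply hvr
      rw [← hr, dot_tr, hPt, ← hu, h, zero_dotProduct]
    have hBu : P *ᵥ (B *ᵥ u) = μ • u := by
      have e1 : P *ᵥ (Bm *ᵥ v) = P *ᵥ (B *ᵥ u) := by
        rw [hBm, hu]
        simp only [← Matrix.mulVec_mulVec]
        rw [Matrix.mulVec_mulVec _ P P, hPP]
      rw [← e1, hv, Matrix.mulVec_smul]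
    obtain ⟨x, y, rfl'⟩ : ∃ x y, u = Sum.elim x y := ⟨u ∘ Sum.inl, u ∘ Sum.inr, by simp⟩
    rw [rfl'] at hPu hBu hu0
    rw [hP, Matrix.fromBlocks_mulVec] at hPu hBu
    rw [hB, Matrix.fromBlocks_mulVec] at hBu
    simp only [Sum.elim_comp_inl, Sum.elim_comp_inr, Matrix.zero_mulVec, add_zero, zero_add] at hPu hBu
    have hx : (1 - Ut * Utᵀ) *ᵥ x = x := by
      have := congrArg (fun f => f ∘ Sum.inl) hPu
      simpa only [Sum.elim_comp_inl] using this
    have hy : (1 - Vt * Vtᵀ) *ᵥ y = y := by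
      have := congrArg (fun f => f ∘ Sum.inr) hPu
      simpa only [Sum.elim_comp_inr] using this
    have hb1 : (1 - Ut * Utᵀ) *ᵥ (A *ᵥ y) = (μ + τ) • x := by
      have : (1 - Ut * Utᵀ) *ᵥ (((-τ) • (1 : Matrix (Fin M) (Fin M) ℝ)) *ᵥ x + A *ᵥ y) = μ • x := by
        have := congrArg (fun f => f ∘ Sum.inl) hBu
        simp only [Sum.elim_comp_inl] at this
        exact this
      rw [Matrix.mulVec_add, Matrix.smul_mulVec, Matrix.one_mulVec, Matrix.mulVec_smul, hx] at this
      rw [add_smul, ← this]; simp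
    have hb2 : (1 - Vt * Vtᵀ) *ᵥ (Aᵀ *ᵥ x) = (μ + τ) • y := by
      have : (1 - Vt * Vtᵀ) *ᵥ (Aᵀ *ᵥ x + ((-τ) • (1 : Matrix (Fin N) (Fin N) ℝ)) *ᵥ y) = μ • y := by
        have := congrArg (fun f => f ∘ Sum.inr) hBu
        simp only [Sum.elim_comp_inr] at this
        exact this
      rw [Matrix.mulVec_add, Matrix.smul_mulVec, Matrix.one_mulVec, Matrix.mulVec_smul, hy] at this
      rw [add_smul, ← this]; simp
    have hne : x ≠ 0 ∨ y ≠ 0 := by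
      by_contra hh
      push Not at hh
      apply hu0
      rw [hh.1, hh.2]
      ext i
      cases i <;> simp
    obtain ⟨k1, k2⟩ := eig_bd A _ _ (proj_tr Ut) (proj_tr Vt) (proj_le Ut hUt) (proj_le Vt hVt) x y (μ + τ)
      (σminm1 - δ) σmax ha hσM0 hx hy hb1 hb2 hne hup (L1 y hy)
    refine ⟨k1, ?_⟩
    rcases k2 with k2 | ⟨k2, _, hx0⟩
    · exact Or.inl k2
    · refine Or.inr ⟨k2, fun hMNe => ?_⟩
      have h3 := L2 hMNe x hx
      rw [hb2, k2, zero_smul] at h3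
      have h4 : vnorm (0 : Fin N → ℝ) = 0 := by simp [vnorm]
      rw [h4] at h3
      have hnx : 0 < vnorm x := lt_of_le_of_ne (vnorm_nonneg x) fun h' => hx0 (vnorm_eq_zero h'.symm)
      nlinarith [mul_pos ha hnx]
  -- the polynomial
  intro j hj
  set a := σminm1 - δ with hadef
  set b := σmax + δ with hbdef
  have hτa : τ < a := by linarith
  have hab : a ≤ b := by linarith
  set j0 := min 1 (M - N) with hj0
  obtain ⟨q, hqd, hq0, hq⟩ := cheb_poly (a ^ 2 - τ ^ 2) (b ^ 2 - τ ^ 2) (by nlinarith) (by nlinarith)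
    ((j - j0) / 2)
  set K := (1 - 2 / (1 + Real.sqrt ((b ^ 2 - τ ^ 2) / (a ^ 2 - τ ^ 2)))) ^ ((j - j0) / 2) with hK
  have hK0 : 0 ≤ 2 * K := (abs_nonneg _).trans (hq (a ^ 2 - τ ^ 2) le_rfl (by nlinarith))
  have hbτ : 0 ≤ b / τ := div_nonneg (by linarith) hτ0.le
  let p : Polynomial ℝ := (Polynomial.C τ⁻¹ * Polynomial.X + 1) ^ j0 *
    q.comp (Polynomial.X ^ 2 + Polynomial.C (2 * τ) * Polynomial.X)
  have hpd : p.natDegree ≤ j := by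
    refine Polynomial.natDegree_mul_le.trans ?_
    have d1 : ((Polynomial.C τ⁻¹ * Polynomial.X + 1 : Polynomial ℝ) ^ j0).natDegree ≤ j0 * 1 := by
      refine Polynomial.natDegree_pow_le.trans (Nat.mul_le_mul_left _ ?_)
      compute_degree
    have d2 : (q.comp (Polynomial.X ^ 2 + Polynomial.C (2 * τ) * Polynomial.X)).natDegree ≤ ((j - j0) / 2) * 2 := by
      refine Polynomial.natDegree_comp_le.trans (Nat.mul_le_mul hqd ?_)
      compute_degree
    omega
  have hp0 : p.eval 0 = 1 := by
    simp [p, hq0]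
  obtain ⟨w, hw, hwe⟩ := krylov_poly Bm p r j hpd hp0
  refine ⟨w, hw, ?_⟩
  rw [hwe]
  have hrw : 2 * (b / τ) ^ j0 * K = (b / τ) ^ j0 * (2 * K) := by ring
  rw [hrw]
  refine spec_bound Bm hBmt p r _ (mul_nonneg (pow_nonneg hbτ _) hK0) ?_
  intro v μ hv hvr
  obtain ⟨k1, k2⟩ := key v μ hv hvr
  have hpe : p.eval μ = ((μ + τ) / τ) ^ j0 * q.eval (μ ^ 2 + 2 * τ * μ) := by
    have : τ⁻¹ * μ + 1 = (μ + τ) / τ := by field_simp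
    simp [p, this]
  rw [hpe, abs_mul, abs_pow, abs_div, abs_of_pos hτ0]
  have k1' : |μ + τ| ≤ b := by linarith
  rcases k2 with k2 | ⟨k2, hne⟩
  · have hsq : μ ^ 2 + 2 * τ * μ = |μ + τ| ^ 2 - τ ^ 2 := by rw [sq_abs]; ring
    have h5 : a ^ 2 ≤ |μ + τ| ^ 2 := pow_le_pow_left₀ ha.le k2 2
    have h6 : |μ + τ| ^ 2 ≤ b ^ 2 := pow_le_pow_left₀ (abs_nonneg _) k1' 2
    have h7 := hq (μ ^ 2 + 2 * τ * μ) (by rw [hsq]; linarith) (by rw [hsq]; linarith)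
    refine mul_le_mul ?_ h7 (abs_nonneg _) (pow_nonneg hbτ _)
    exact pow_le_pow_left₀ (by positivity) (by gcongr) _
  · have hj1 : j0 = 1 := by omega
    rw [k2, hj1]
    simp only [abs_zero, zero_div, pow_one, zero_mul]
    exact mul_nonneg hbτ hK0
end

section
/- Let A ∈ ℝ^{M×N}, τ ∈ ℝ, and let Ũ ∈ ℝ^{M×m} and Ṽ ∈ ℝ^{N×m} have orthonormal columns (ŨᵀŨ = I_m, ṼᵀṼ = I_m). Set Θ = Ũᵀ A Ṽ, B = [[−τ I_M, A], [Aᵀ, −τ I_N]], and Π = diag(I_M − ŨŨᵀ, I_N − ṼṼᵀ). Then for all s ∈ ℝ^M and t ∈ ℝ^N, Π B (s; t) = Π B Π (s; t) + r_tail, where r_tail ∈ ℝ^{M+N} has upper block (A Ṽ − Ũ Θ)(Ṽᵀ t) ∈ ℝ^M and lower block (Aᵀ Ũ − Ṽ Θᵀ)(Ũᵀ s) ∈ ℝ^N; in particular, when Θ is diagonal, r_tail = [[0, A Ṽ − Ũ Θ], [Aᵀ Ũ − Ṽ Θ, 0]] · (Ũᵀ s; Ṽᵀ t). -/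
open Matrix

/-- equations (4.5)–(4.7). The discrepancy `r_tail` between the one-sided
projected system and the two-sided projected system in the derivation of the preconditioned
JDSVD correction equation. -/
theorem rtail_identity {M N m : ℕ}
    (A : Matrix (Fin M) (Fin N) ℝ) (τ : ℝ)
    (Ut : Matrix (Fin M) (Fin m) ℝ) (Vt : Matrix (Fin N) (Fin m) ℝ)
    (hUt : Utᵀ * Ut = 1) (hVt : Vtᵀ * Vt = 1)
    (Θ : Matrix (Fin m) (Fin m) ℝ) (hΘ : Θ = Utᵀ * A * Vt)
    (B P : Matrix (Fin M ⊕ Fin N) (Fin M ⊕ Fin N) ℝ)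
    (hB : B = Matrix.fromBlocks ((-τ) • 1) A Aᵀ ((-τ) • 1))
    (hP : P = Matrix.fromBlocks (1 - Ut * Utᵀ) 0 0 (1 - Vt * Vtᵀ)) :
    ∀ (s : Fin M → ℝ) (t : Fin N → ℝ),
      P *ᵥ (B *ᵥ Sum.elim s t) =
        P *ᵥ (B *ᵥ (P *ᵥ Sum.elim s t)) +
          Sum.elim ((A * Vt - Ut * Θ) *ᵥ (Vtᵀ *ᵥ t)) ((Aᵀ * Ut - Vt * Θᵀ) *ᵥ (Utᵀ *ᵥ s)) ∧
      ((∀ i j : Fin m, i ≠ j → Θ i j = 0) →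
        Sum.elim ((A * Vt - Ut * Θ) *ᵥ (Vtᵀ *ᵥ t)) ((Aᵀ * Ut - Vt * Θᵀ) *ᵥ (Utᵀ *ᵥ s)) =
          (Matrix.fromBlocks (0 : Matrix (Fin M) (Fin m) ℝ) (A * Vt - Ut * Θ)
              (Aᵀ * Ut - Vt * Θ) (0 : Matrix (Fin N) (Fin m) ℝ)) *ᵥ
            Sum.elim (Utᵀ *ᵥ s) (Vtᵀ *ᵥ t)) := by
  intro s t
  have hU : ∀ w, Utᵀ *ᵥ (Ut *ᵥ w) = w := fun w => by
    rw [Matrix.mulVec_mulVec, hUt, Matrix.one_mulVec]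
  have hV : ∀ w, Vtᵀ *ᵥ (Vt *ᵥ w) = w := fun w => by
    rw [Matrix.mulVec_mulVec, hVt, Matrix.one_mulVec]
  refine ⟨?_, ?_⟩
  · subst hΘ hB hP
    simp only [Matrix.fromBlocks_mulVec, Sum.elim_comp_inl, Sum.elim_comp_inr,
      Matrix.zero_mulVec, add_zero, zero_add, Matrix.sub_mulVec, Matrix.one_mulVec,
      Matrix.smul_mulVec, ← Matrix.mulVec_mulVec, Matrix.mulVec_add, Matrix.mulVec_sub,
      Matrix.mulVec_smul, Matrix.transpose_mul, Matrix.transpose_transpose, hU, hV,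
      ← Sum.elim_add_add]
    congr 1 <;> module
  · intro hd
    have hT : Θᵀ = Θ := by
      ext i j
      by_cases h : i = j
      · subst h; rfl
      · rw [Matrix.transpose_apply, hd i j h, hd j i (Ne.symm h)]
    rw [hT, Matrix.fromBlocks_mulVec]
    simp
end
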